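/- Let f : ℝ≥0∞ → ℝ≥0∞ be monotone, α, β ∈ ℝ≥0, and g = α·f + β. Then for every pGCL program S and every expectation X, wp[T'_g(S)](α·X) = α·wp[T'_f(S)](X), where T'_f and T'_g are the auxiliary reward transformations using the same fresh ghost variable τ. -/

import Mathlib

open ENNReal

/-- Program states: maps from variables to extended non-negative reals. -/
abbrev PState (V : Type) := V → ℝ≥0∞

/-- Expectations: maps from states to extended non-negative reals. -/
abbrev Expct (V : Type) := PState V → ℝ≥0∞

/-- Syntax of pGCL programs. -/
inductive pGCL (V : Type) : Type 1
  | skip : pGCL V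
  | assign : V → Expct V → pGCL V
  | reward : Expct V → pGCL V
  | seq : pGCL V → pGCL V → pGCL V
  | prob : (p : ℝ≥0∞) → p ≤ 1 → pGCL V → pGCL V → pGCL V
  | ifte : (PState V → Bool) → pGCL V → pGCL V → pGCL V
  | loop : (PState V → Bool) → pGCL V → pGCL V

variable {V : Type} [DecidableEq V]

/-- The weakest pre-expectation transformer, bundled as an order hom. -/
noncomputable def wpHom : pGCL V → (Expct V →o Expct V)
  | .skip => OrderHom.id
  | .assign x e => ⟨fun X σ => X (Function.update σ x (e σ)), fun _ _ h σ => h _⟩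
  | .reward e => ⟨fun X σ => e σ + X σ, fun _ _ h σ => add_le_add le_rfl (h σ)⟩
  | .seq S₁ S₂ => (wpHom S₁).comp (wpHom S₂)
  | .prob p _ S₁ S₂ =>
      ⟨fun X σ => p * wpHom S₁ X σ + (1 - p) * wpHom S₂ X σ, by
        intro X Y h σ
        exact add_le_add (mul_le_mul' (le_refl p) ((wpHom S₁).monotone h σ))
          (mul_le_mul' (le_refl (1 - p)) ((wpHom S₂).monotone h σ))⟩
  | .ifte b S₁ S₂ =>
      ⟨fun X σ => if b σ then wpHom S₁ X σ else wpHom S₂ X σ, by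
        intro X Y h σ
        dsimp only
        split
        · exact (wpHom S₁).monotone h σ
        · exact (wpHom S₂).monotone h σ⟩
  | .loop b S =>
      ⟨fun X => OrderHom.lfp
        ⟨fun Y σ => if b σ then wpHom S Y σ else X σ, by
          intro Y₁ Y₂ h σ
          dsimp only
          split
          · exact (wpHom S).monotone h σ
          · exact le_rfl⟩, by
        intro X₁ X₂ h
        apply OrderHom.lfp_le
        have := OrderHom.map_lfp
          (⟨fun Y σ => if b σ then wpHom S Y σ else X₂ σ, by
            intro Y₁ Y₂ h σ
            dsimp only
            split
            · exact (wpHom S).monotone h σ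
            · exact le_rfl⟩ : Expct V →o Expct V)
        refine le_trans (fun σ => ?_) (le_of_eq this)
        show (if b σ then wpHom S _ σ else X₁ σ) ≤ (if b σ then wpHom S _ σ else X₂ σ)
        split
        · exact le_rfl
        · exact h σ⟩

/-- The weakest pre-expectation `wp[S](X)`. -/
noncomputable def wp (S : pGCL V) (X : Expct V) : Expct V := wpHom S X

/-- An expression does not depend on variable `τ`. -/
def UnusedE (τ : V) (e : Expct V) : Prop := ∀ σ v, e (Function.update σ τ v) = e σ

/-- A Boolean guard does not depend on variable `τ`. -/
def UnusedB (τ : V) (b : PState V → Bool) : Prop := ∀ σ v, b (Function.update σ τ v) = b σ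

/-- Variable `τ` does not occur in the program `S`. -/
def NotOccurs (τ : V) : pGCL V → Prop
  | .skip => True
  | .assign x e => x ≠ τ ∧ UnusedE τ e
  | .reward e => UnusedE τ e
  | .seq S₁ S₂ => NotOccurs τ S₁ ∧ NotOccurs τ S₂
  | .prob _ _ S₁ S₂ => NotOccurs τ S₁ ∧ NotOccurs τ S₂
  | .ifte b S₁ S₂ => UnusedB τ b ∧ NotOccurs τ S₁ ∧ NotOccurs τ S₂
  | .loop b S => UnusedB τ b ∧ NotOccurs τ S

/-- Auxiliary reward transformation `T'_f` with ghost variable `τ`: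
replaces `reward(e)` by `reward(f(τ+e) − f(τ)); τ := τ + e`. -/
noncomputable def Taux (τ : V) (f : ℝ≥0∞ → ℝ≥0∞) : pGCL V → pGCL V
  | .reward e =>
      .seq (.reward fun σ => f (σ τ + e σ) - f (σ τ)) (.assign τ (fun σ => σ τ + e σ))
  | .seq S₁ S₂ => .seq (Taux τ f S₁) (Taux τ f S₂)
  | .prob p hp S₁ S₂ => .prob p hp (Taux τ f S₁) (Taux τ f S₂)
  | .ifte b S₁ S₂ => .ifte b (Taux τ f S₁) (Taux τ f S₂)
  | .loop b S => .loop b (Taux τ f S)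
  | .skip => .skip
  | .assign x e => .assign x e

/-- Full reward transformation `T_f(S) = τ := 0; reward(f(0)); T'_f(S)`. -/
noncomputable def Tfull (τ : V) (f : ℝ≥0∞ → ℝ≥0∞) (S : pGCL V) : pGCL V :=
  .seq (.assign τ (fun _ => 0)) (.seq (.reward fun _ => f 0) (Taux τ f S))

/-- The auxiliary transformation for `g = α·f + β` preserves
scalar multiplication: `wp[T'_g(S)](α·X) = α·wp[T'_f(S)](X)`. -/
theorem wp_Taux_scale (f : ℝ≥0∞ → ℝ≥0∞) (hf : Monotone f) (α β : NNReal)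
    (τ : V) (S : pGCL V) (hτ : NotOccurs τ S) (X : Expct V) :
    wp (Taux τ (fun x => α * f x + β) S) (fun σ => α * X σ)
      = fun σ => α * wp (Taux τ f S) X σ := by
  clear hτ
  unfold wp
  induction S generalizing X with
  | skip => rfl
  | assign x e => rfl
  | reward e =>
    funext σ
    show ((α * f (σ τ + e σ) + β) - (α * f (σ τ) + β) : ℝ≥0∞) + α * X _
      = α * ((f (σ τ + e σ) - f (σ τ)) + X _)
    rw [mul_add, ENNReal.mul_sub (fun _ _ => ENNReal.coe_ne_top),
      ENNReal.add_sub_add_eq_sub_right ENNReal.coe_ne_top]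
  | seq S₁ S₂ ih₁ ih₂ =>
    show wpHom (Taux τ _ S₁) (wpHom (Taux τ _ S₂) _) = _
    rw [ih₂, ih₁]
    rfl
  | prob p hp S₁ S₂ ih₁ ih₂ =>
    funext σ
    show p * wpHom (Taux τ _ S₁) _ σ + (1 - p) * wpHom (Taux τ _ S₂) _ σ
      = α * (p * wpHom (Taux τ f S₁) X σ + (1 - p) * wpHom (Taux τ f S₂) X σ)
    rw [ih₁, ih₂]
    ring
  | ifte b S₁ S₂ ih₁ ih₂ =>
    funext σ
    show (if b σ then wpHom (Taux τ _ S₁) _ σ else wpHom (Taux τ _ S₂) _ σ)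
      = α * (if b σ then wpHom (Taux τ f S₁) X σ else wpHom (Taux τ f S₂) X σ)
    rw [ih₁, ih₂]
    split <;> rfl
  | loop b S ih =>
    have hfix : ∀ (T : pGCL V) (Z : Expct V),
        (fun σ => if b σ then wpHom T (wpHom (.loop b T) Z) σ else Z σ)
          = wpHom (.loop b T) Z := by
      intro T Z
      simp only [wpHom]
      exact OrderHom.map_lfp
        (⟨fun Y σ => if b σ then wpHom T Y σ else Z σ, by
          intro Y₁ Y₂ h σ
          dsimp only
          split
          · exact (wpHom T).monotone h σ
          · exact le_rfl⟩ : Expct V →o Expct V)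
    have hle : ∀ (T : pGCL V) (Z Y : Expct V),
        (∀ σ, (if b σ then wpHom T Y σ else Z σ) ≤ Y σ) → wpHom (.loop b T) Z ≤ Y := by
      intro T Z Y h
      simp only [wpHom]
      exact OrderHom.lfp_le (_ : Expct V →o Expct V) h
    simp only [Taux]
    apply le_antisymm
    · apply hle
      intro σ
      rw [ih]
      conv_rhs => rw [← hfix]
      split <;> simp_all
    · by_cases hα : α = 0
      · subst hα
        intro σ
        simp
      have h0 : (α : ℝ≥0∞) ≠ 0 := by simpa using hα
      have ht : (α : ℝ≥0∞) ≠ ⊤ := ENNReal.coe_ne_top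
      set Z := wpHom (.loop b (Taux τ (fun x => α * f x + β) S)) (fun σ => α * X σ) with hZ
      have hc : ∀ y : ℝ≥0∞, (α : ℝ≥0∞) * ((α : ℝ≥0∞)⁻¹ * y) = y := fun y => by
        rw [← mul_assoc, ENNReal.mul_inv_cancel h0 ht, one_mul]
      have key : wpHom (.loop b (Taux τ f S)) X ≤ fun σ => (α : ℝ≥0∞)⁻¹ * Z σ := by
        apply hle
        intro σ
        have h1 := ih (fun σ => (α : ℝ≥0∞)⁻¹ * Z σ)
        simp only [hc] at h1
        have h2 := congrFun (hfix (Taux τ (fun x => α * f x + β) S) (fun σ => α * X σ)) σ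
        rw [← hZ, h1] at h2
        rw [← ENNReal.mul_le_mul_iff_right h0 ht, hc, ← h2]
        split <;> exact le_rfl
      intro σ
      calc (α : ℝ≥0∞) * _ ≤ α * ((α : ℝ≥0∞)⁻¹ * Z σ) := mul_le_mul' le_rfl (key σ)
        _ = Z σ := hc _
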